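/- Suppose g₀ is a Lie subalgebra of e with g₀ ∩ a = 0 and g₀ + a = e (so e = g₀ ⊕ a as F-vector spaces). For every e-equivariant linear automorphism φ of a, the map ε(φ) : e → e defined by ε(φ)(x + m) = x + φ(m) for x ∈ g₀, m ∈ a is a Lie algebra automorphism of e satisfying ε(φ)(y) - y ∈ a for all y ∈ e and ε(φ)(m) = φ(m) for all m ∈ a; moreover ε(φ₁ ∘ φ₂) = ε(φ₁) ∘ ε(φ₂) for all such φ₁, φ₂. Hence the restriction map from the group of Lie algebra automorphisms of e inducing the identity on e/a to the group of e-equivariant automorphisms of a is a surjective group homomorphism admitting a group-homomorphism section. -/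

import Mathlib

/-- An `e`-equivariant automorphism of the ideal `a`: a bijective `F`-linear map
`φ : a → a` with `φ ⁅x, m⁆ = ⁅x, φ m⁆` for all `x ∈ e`, `m ∈ a`. -/
def IsEquivariantAut {F : Type*} [Field F] {e : Type*} [LieRing e] [LieAlgebra F e]
    (a : LieIdeal F e) (φ : a →ₗ[F] a) : Prop :=
  (∀ (x : e) (m : a), φ ⁅x, m⁆ = ⁅x, φ m⁆) ∧ Function.Bijective φ

/-- If `e = g₀ ⊕ a` with `g₀` a Lie subalgebra and `a` an abelian ideal, then for every
`e`-equivariant automorphism `φ` of `a` the map `ε φ : x + m ↦ x + φ m` is a Lie algebra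
automorphism of `e` inducing the identity on `e/a` and restricting to `φ` on `a`, and
`ε` is multiplicative; hence the restriction map from the group of automorphisms of `e`
inducing the identity on `e/a` onto the group of `e`-equivariant automorphisms of `a` is
a surjective group homomorphism admitting a group-homomorphism section. -/
theorem stmt17 {F : Type*} [Field F] [CharZero F]
    {e : Type*} [LieRing e] [LieAlgebra F e]
    (a : LieIdeal F e)
    (hab : ∀ m ∈ a, ∀ n ∈ a, ⁅m, n⁆ = (0 : e))
    (g₀ : LieSubalgebra F e)
    (hdisj : ∀ x : e, x ∈ g₀ → x ∈ a → x = 0)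
    (hspan : ∀ y : e, ∃ x ∈ g₀, ∃ m ∈ a, y = x + m)
    (E : (a →ₗ[F] a) → (e → e))
    (hE : ∀ φ : a →ₗ[F] a, IsEquivariantAut a φ →
      ∀ x ∈ g₀, ∀ m : a, E φ (x + (m : e)) = x + (φ m : e)) :
    (∀ φ : a →ₗ[F] a, IsEquivariantAut a φ →
      (∀ u v : e, E φ (u + v) = E φ u + E φ v) ∧
      (∀ (c : F) (u : e), E φ (c • u) = c • E φ u) ∧
      (∀ u v : e, E φ ⁅u, v⁆ = ⁅E φ u, E φ v⁆) ∧
      Function.Bijective (E φ) ∧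
      (∀ y : e, E φ y - y ∈ a) ∧
      (∀ m : a, E φ (m : e) = (φ m : e))) ∧
    (∀ φ₁ φ₂ : a →ₗ[F] a, IsEquivariantAut a φ₁ → IsEquivariantAut a φ₂ →
      ∀ u : e, E (φ₁ ∘ₗ φ₂) u = E φ₁ (E φ₂ u)) ∧
    (∀ φ : a →ₗ[F] a, IsEquivariantAut a φ →
      ∃ f : e →ₗ⁅F⁆ e, Function.Bijective f ∧ (∀ y, f y - y ∈ a) ∧
        ∀ m : a, f (m : e) = (φ m : e)) := by
  have hs : ∀ y : e, ∃ x ∈ g₀, ∃ m : a, y = x + (m : e) := by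
    intro y
    obtain ⟨x, hx, m, hm, rfl⟩ := hspan y
    exact ⟨x, hx, ⟨m, hm⟩, rfl⟩
  have hmain : ∀ φ : a →ₗ[F] a, IsEquivariantAut a φ →
      (∀ u v : e, E φ (u + v) = E φ u + E φ v) ∧
      (∀ (c : F) (u : e), E φ (c • u) = c • E φ u) ∧
      (∀ u v : e, E φ ⁅u, v⁆ = ⁅E φ u, E φ v⁆) ∧
      Function.Bijective (E φ) ∧
      (∀ y : e, E φ y - y ∈ a) ∧
      (∀ m : a, E φ (m : e) = (φ m : e)) := by
    intro φ hφ
    have h := hE φ hφ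
    refine ⟨?_, ?_, ?_, ⟨?_, ?_⟩, ?_, ?_⟩
    · intro u v
      obtain ⟨x, hx, m, rfl⟩ := hs u
      obtain ⟨y, hy, n, rfl⟩ := hs v
      have e1 : x + (m : e) + (y + (n : e)) = (x + y) + ((m + n : a) : e) := by
        push_cast; abel
      rw [e1, h _ (add_mem hx hy), h _ hx, h _ hy, map_add]
      push_cast; abel
    · intro c u
      obtain ⟨x, hx, m, rfl⟩ := hs u
      have e1 : c • (x + (m : e)) = c • x + ((c • m : a) : e) := by
        simp
      rw [e1, h _ (g₀.smul_mem c hx), h _ hx, map_smul]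
      simp
    · intro u v
      obtain ⟨x, hx, m, rfl⟩ := hs u
      obtain ⟨y, hy, n, rfl⟩ := hs v
      have key : ∀ p q : a, ⁅x + (p : e), y + (q : e)⁆
          = ⁅x, y⁆ + ((⁅x, q⁆ - ⁅y, p⁆ : a) : e) := by
        intro p q
        have h0 := hab p p.2 q q.2
        have h1 : ⁅(p : e), y⁆ = - ⁅y, (p : e)⁆ := (lie_skew _ _).symm
        have h2 : ((⁅x, q⁆ - ⁅y, p⁆ : a) : e) = ⁅x, (q : e)⁆ - ⁅y, (p : e)⁆ := rfl
        rw [h2, add_lie, lie_add, lie_add, h0, h1]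
        abel
      rw [key, h _ (g₀.lie_mem hx hy), h _ hx, h _ hy, key, map_sub, hφ.1, hφ.1]
    · intro u v huv
      obtain ⟨x, hx, m, rfl⟩ := hs u
      obtain ⟨y, hy, n, rfl⟩ := hs v
      rw [h _ hx, h _ hy] at huv
      have e1 : x - y = ((φ n - φ m : a) : e) := by
        push_cast
        rw [sub_eq_sub_iff_add_eq_add, huv, add_comm]
      have e2 : x - y = 0 := hdisj _ (sub_mem hx hy) (e1 ▸ (φ n - φ m : a).2)
      obtain rfl := sub_eq_zero.1 e2
      have e3 : φ m = φ n := Subtype.ext (add_left_cancel huv)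
      rw [hφ.2.1 e3]
    · intro v
      obtain ⟨y, hy, n, rfl⟩ := hs v
      obtain ⟨m, rfl⟩ := hφ.2.2 n
      exact ⟨y + (m : e), h _ hy m⟩
    · intro v
      obtain ⟨y, hy, n, rfl⟩ := hs v
      rw [h _ hy, add_sub_add_left_eq_sub]
      exact (φ n - n : a).2
    · intro m
      simpa using h 0 g₀.zero_mem m
  refine ⟨hmain, ?_, ?_⟩
  · intro φ₁ φ₂ h₁ h₂ u
    obtain ⟨x, hx, m, rfl⟩ := hs u
    have h₃ : IsEquivariantAut a (φ₁ ∘ₗ φ₂) := by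
      refine ⟨fun x m => ?_, ?_⟩
      · rw [LinearMap.comp_apply, LinearMap.comp_apply, h₂.1, h₁.1]
      · rw [LinearMap.coe_comp]
        exact h₁.2.comp h₂.2
    rw [hE _ h₃ _ hx, hE _ h₂ _ hx, hE _ h₁ _ hx, LinearMap.comp_apply]
  · intro φ hφ
    obtain ⟨p1, p2, p3, p4, p5, p6⟩ := hmain φ hφ
    exact ⟨{ toFun := E φ, map_add' := p1, map_smul' := p2, map_lie' := fun {u v} => p3 u v },
      p4, p5, p6⟩
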